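/- For every λ ∈ ℂ and every nonzero vector x ∈ ℂ^n, one has A x = λ B x if and only if C x = λ x and x lies in the column space of Q_{1:r}. In particular, the standard eigenvalue problem C x = λ x restricted to eigenvectors in the column space of Q_{1:r} is equivalent to the generalized eigenvalue problem A x = λ B x with finite eigenvalue λ. -/

import Mathlib

noncomputable section
open Matrix

/-- The `n×n` Jordan block with eigenvalue `l`: diagonal entries `l`,
superdiagonal entries `1`, all other entries `0`. -/
def jordanBlock (n : ℕ) (l : ℂ) : Matrix (Fin n) (Fin n) ℂ :=
  Matrix.of fun p q : Fin n =>
    if (q : ℕ) = (p : ℕ) then l else if (q : ℕ) = (p : ℕ) + 1 then 1 else 0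

/-- `C := Q_{1:r} J_{1:r} Q̃_{1:r}ᴴ`, where `Q_{1:r}` consists of the columns of `Q`
belonging to the first `r` (Jordan) blocks, `Q̃_{1:r}ᴴ` of the corresponding rows of
`Q⁻¹`, and `J_{1:r} = J_{n_1}(λ_1) ⊕ ⋯ ⊕ J_{n_r}(λ_r)`. -/
def Cmat (d : ℕ) (ni : Fin d → ℕ) (r : ℕ) (lam : Fin d → ℂ)
    (Q : Matrix ((i : Fin d) × Fin (ni i)) ((i : Fin d) × Fin (ni i)) ℂ) :
    Matrix ((i : Fin d) × Fin (ni i)) ((i : Fin d) × Fin (ni i)) ℂ :=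
  Q.submatrix id (Subtype.val : {x : (i : Fin d) × Fin (ni i) // (x.1 : ℕ) < r} → _) *
    (Matrix.blockDiagonal' (fun i => jordanBlock (ni i) (lam i))).submatrix
      (Subtype.val : {x : (i : Fin d) × Fin (ni i) // (x.1 : ℕ) < r} → _) Subtype.val *
    (Q⁻¹).submatrix (Subtype.val : {x : (i : Fin d) × Fin (ni i) // (x.1 : ℕ) < r} → _) id

/-!
Write `Q = [Q₁, Q₂]` and `Q⁻¹ = [S₁; S₂]`, where `Q₁` collects the columns of the finite blocks.
In the coordinates `u = S₁ x`, `v = S₂ x` the equation `A x = l B x` decouples into `J u = l u` and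
`v = l N v`. Since `N` is nilpotent, `1 - l N` is invertible, so the second equation says `v = 0`,
that is, `x = Q₁ u`; on such `x`, `J u = l u` is `Q₁ J S₁ x = l x`.
-/

section NilpotentMatrix

variable {R n k : Type*} [Fintype n] [DecidableEq n] [Fintype k] [DecidableEq k]

theorem isNilpotent_of_isNilpotent_fromBlocks₂₂ [Semiring R] {J : Matrix n n R} {N : Matrix k k R}
    (h : IsNilpotent (fromBlocks J 0 0 N)) : IsNilpotent N := by
  obtain ⟨e, he⟩ := h
  rw [fromBlocks_diagonal_pow, ← fromBlocks_zero] at he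
  exact ⟨e, (fromBlocks_inj.1 he).2.2.2⟩

variable [CommRing R]

theorem eq_zero_of_eq_smul_mulVec_of_isNilpotent {N : Matrix n n R} (hN : IsNilpotent N) {l : R}
    {v : n → R} (hv : v = l • N *ᵥ v) : v = 0 := by
  have hunit : IsUnit (1 - l • N) := (hN.smul l).isUnit_one_sub
  apply mulVec_injective_of_isUnit hunit
  rw [sub_mulVec, one_mulVec, smul_mulVec, mulVec_zero, ← hv, sub_self]

theorem isNilpotent_of_isUpperTriangular [LinearOrder n] {M : Matrix n n R}
    (hM : M.IsUpperTriangular) (hdiag : ∀ i, M i i = 0) : IsNilpotent M := by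
  refine ⟨Fintype.card n, ?_⟩
  simpa [charpoly_of_isUpperTriangular M hM, hdiag] using aeval_self_charpoly M

end NilpotentMatrix

theorem isUpperTriangular_jordanBlock (n : ℕ) (l : ℂ) : (jordanBlock n l).IsUpperTriangular := by
  intro p q hqp
  have hlt : (q : ℕ) < p := hqp
  simp [jordanBlock, hlt.ne, show (q : ℕ) ≠ p + 1 by omega]

theorem isNilpotent_jordanBlock_zero (n : ℕ) : IsNilpotent (jordanBlock n 0) :=
  isNilpotent_of_isUpperTriangular (isUpperTriangular_jordanBlock n 0) fun p => by
    simp [jordanBlock]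

section BlockDiagonal

variable {R o : Type*} {m : o → Type*} [DecidableEq o] (s : o → Prop) [DecidablePred s]

theorem blockDiagonal'_ite_submatrix_sumCompl [Zero R] (M M' : ∀ i, Matrix (m i) (m i) R) :
    (blockDiagonal' fun i => if s i then M i else M' i).submatrix
        (Equiv.sumCompl fun x : Σ i, m i => s x.1) (Equiv.sumCompl fun x : Σ i, m i => s x.1) =
      fromBlocks ((blockDiagonal' M).toBlock (fun x => s x.1) fun x => s x.1) 0 0
        ((blockDiagonal' M').toBlock (fun x => ¬s x.1) fun x => ¬s x.1) := by
  ext (⟨⟨i, a⟩, hi⟩ | ⟨⟨i, a⟩, hi⟩) (⟨⟨j, b⟩, hj⟩ | ⟨⟨j, b⟩, hj⟩) <;>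
    rcases eq_or_ne i j with rfl | hij <;>
    first | contradiction | simp_all [blockDiagonal'_apply_ne]

variable [CommSemiring R] [Fintype o] [∀ i, Fintype (m i)] [∀ i, DecidableEq (m i)]

theorem isNilpotent_blockDiagonal' {N : ∀ i, Matrix (m i) (m i) R} (hN : ∀ i, IsNilpotent (N i)) :
    IsNilpotent (blockDiagonal' N) := by
  refine isNilpotent_iff_forall_row.2 fun ⟨i, a⟩ => ?_
  obtain ⟨e, he⟩ := hN i
  refine ⟨e, ?_⟩
  ext ⟨j, b⟩
  rw [row_apply, ← blockDiagonal'_pow]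
  rcases eq_or_ne i j with rfl | hij
  · simp [he]
  · simp [blockDiagonal'_apply_ne, hij]

theorem isNilpotent_toBlock_blockDiagonal'_compl {N : ∀ i, Matrix (m i) (m i) R}
    (hN : ∀ i, ¬s i → IsNilpotent (N i)) :
    IsNilpotent ((blockDiagonal' N).toBlock (fun x => ¬s x.1) fun x => ¬s x.1) := by
  have hzero : IsNilpotent (blockDiagonal' fun i => if s i then 0 else N i) := by
    refine isNilpotent_blockDiagonal' fun i => ?_
    split_ifs with hi
    · exact IsNilpotent.zero
    · exact hN i hi
  have hreindex := hzero.map (reindexRingEquiv R (Equiv.sumCompl fun x : Σ i, m i => s x.1).symm)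
  have hblocks := blockDiagonal'_ite_submatrix_sumCompl s 0 N
  simp only [Pi.zero_apply] at hblocks
  rw [coe_reindexRingEquiv, reindex_apply, Equiv.symm_symm, hblocks] at hreindex
  exact isNilpotent_of_isNilpotent_fromBlocks₂₂ hreindex

end BlockDiagonal

section ComplementaryColumns

variable {R ι m k : Type*} [CommSemiring R] [Fintype ι] [Fintype m] [Fintype k]
  {Q₁ : Matrix ι m R} {Q₂ : Matrix ι k R} {S₁ : Matrix m ι R} {S₂ : Matrix k ι R}

theorem mem_range_mulVecLin_iff_of_fromCols_mul_fromRows [DecidableEq ι]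
    (hQS : fromCols Q₁ Q₂ * fromRows S₁ S₂ = 1) (hSQ : S₂ * Q₁ = 0) {x : ι → R} :
    x ∈ LinearMap.range Q₁.mulVecLin ↔ S₂ *ᵥ x = 0 := by
  constructor
  · rintro ⟨u, rfl⟩
    rw [mulVecLin_apply, mulVec_mulVec, hSQ, zero_mulVec]
  · intro hx
    have hdecomp : Q₁ *ᵥ S₁ *ᵥ x + Q₂ *ᵥ S₂ *ᵥ x = x := by
      rw [mulVec_mulVec, mulVec_mulVec, ← add_mulVec, ← fromCols_mul_fromRows, hQS, one_mulVec]
    exact ⟨S₁ *ᵥ x, by simpa [hx] using hdecomp⟩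

theorem mul_mul_mulVec_eq_smul_iff_of_mem_range [DecidableEq m] (hSQ : S₁ * Q₁ = 1)
    (J : Matrix m m R) {l : R} {x : ι → R} (hx : x ∈ LinearMap.range Q₁.mulVecLin) :
    (Q₁ * J * S₁) *ᵥ x = l • x ↔ J *ᵥ S₁ *ᵥ x = l • S₁ *ᵥ x := by
  obtain ⟨u, rfl⟩ := hx
  have hcancel (w : m → R) : S₁ *ᵥ Q₁ *ᵥ w = w := by rw [mulVec_mulVec, hSQ, one_mulVec]
  have hinj : Function.Injective Q₁.mulVec := Function.LeftInverse.injective hcancel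
  simp only [mulVecLin_apply, ← mulVec_mulVec, hcancel]
  rw [← mulVec_smul, hinj.eq_iff]

end ComplementaryColumns

section BlockPencil

variable {R a ι m k : Type*} [CommRing R] [Fintype a] [Fintype ι] [Fintype m] [Fintype k]
  [DecidableEq ι] [DecidableEq m] [DecidableEq k]

theorem fromBlocks_mulVec_eq_smul_fromBlocks_mulVec_iff {J : Matrix m m R} {N : Matrix k k R}
    (hN : IsNilpotent N) {l : R} {u : m → R} {v : k → R} :
    fromBlocks J 0 0 1 *ᵥ Sum.elim u v = l • fromBlocks 1 0 0 N *ᵥ Sum.elim u v ↔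
      J *ᵥ u = l • u ∧ v = 0 := by
  have hsmul (u' : m → R) (v' : k → R) :
      l • Sum.elim u' v' = Sum.elim (l • u') (l • v') := by ext (_ | _) <;> rfl
  simp only [fromBlocks_mulVec, Sum.elim_comp_inl, Sum.elim_comp_inr, one_mulVec, zero_mulVec,
    add_zero, zero_add, hsmul, Sum.elim_eq_iff]
  refine and_congr_right fun _ => ⟨eq_zero_of_eq_smul_mulVec_of_isNilpotent hN, ?_⟩
  rintro rfl
  rw [mulVec_zero, smul_zero]

theorem mulVec_eq_smul_mulVec_iff_of_fromBlocks {A B : Matrix a ι R}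
    {Q₁ : Matrix ι m R} {Q₂ : Matrix ι k R} {S₁ : Matrix m ι R} {S₂ : Matrix k ι R}
    {P : Matrix (m ⊕ k) a R} {J : Matrix m m R} {N : Matrix k k R}
    (hP : Function.Injective P.mulVec) (hQS : fromCols Q₁ Q₂ * fromRows S₁ S₂ = 1)
    (hSQ : fromRows S₁ S₂ * fromCols Q₁ Q₂ = 1)
    (hA : P * A * fromCols Q₁ Q₂ = fromBlocks J 0 0 1)
    (hB : P * B * fromCols Q₁ Q₂ = fromBlocks 1 0 0 N) (hN : IsNilpotent N) {l : R} {x : ι → R} :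
    A *ᵥ x = l • B *ᵥ x ↔
      (Q₁ * J * S₁) *ᵥ x = l • x ∧ x ∈ LinearMap.range Q₁.mulVecLin := by
  obtain ⟨h₁₁, -, h₂₁, -⟩ : S₁ * Q₁ = 1 ∧ S₁ * Q₂ = 0 ∧ S₂ * Q₁ = 0 ∧ S₂ * Q₂ = 1 := by
    rwa [fromRows_mul_fromCols, ← fromBlocks_one, fromBlocks_inj] at hSQ
  have hcoords (M : Matrix a ι R) :
      P *ᵥ M *ᵥ x = (P * M * fromCols Q₁ Q₂) *ᵥ Sum.elim (S₁ *ᵥ x) (S₂ *ᵥ x) := by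
    rw [← fromRows_mulVec, mulVec_mulVec, mulVec_mulVec, Matrix.mul_assoc _ _ (fromRows S₁ S₂),
      hQS, Matrix.mul_one]
  calc A *ᵥ x = l • B *ᵥ x
    _ ↔ P *ᵥ A *ᵥ x = l • P *ᵥ B *ᵥ x := by rw [← mulVec_smul P, hP.eq_iff]
    _ ↔ J *ᵥ S₁ *ᵥ x = l • S₁ *ᵥ x ∧ S₂ *ᵥ x = 0 := by
      rw [hcoords, hcoords, hA, hB, fromBlocks_mulVec_eq_smul_fromBlocks_mulVec_iff hN]
    _ ↔ J *ᵥ S₁ *ᵥ x = l • S₁ *ᵥ x ∧ x ∈ LinearMap.range Q₁.mulVecLin := by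
      rw [mem_range_mulVecLin_iff_of_fromCols_mul_fromRows hQS h₂₁]
    _ ↔ (Q₁ * J * S₁) *ᵥ x = l • x ∧ x ∈ LinearMap.range Q₁.mulVecLin :=
      and_congr_left fun hx => (mul_mul_mulVec_eq_smul_iff_of_mem_range h₁₁ J hx).symm

end BlockPencil

theorem stmt_1_general {R o : Type*} {m : o → Type*} [CommRing R] [Fintype o] [DecidableEq o]
    [∀ i, Fintype (m i)] [∀ i, DecidableEq (m i)] (s : o → Prop) [DecidablePred s]
    {J N : ∀ i, Matrix (m i) (m i) R} (hN : ∀ i, ¬s i → IsNilpotent (N i))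
    {A B P Q : Matrix (Σ i, m i) (Σ i, m i) R} (hP : IsUnit P) (hQ : IsUnit Q)
    (hA : P * A * Q = blockDiagonal' fun i => if s i then J i else 1)
    (hB : P * B * Q = blockDiagonal' fun i => if s i then 1 else N i)
    (l : R) (x : (Σ i, m i) → R) :
    A *ᵥ x = l • B *ᵥ x ↔
      (Q.submatrix id (Subtype.val : {y : Σ i, m i // s y.1} → _) *
          (blockDiagonal' J).toBlock (fun y => s y.1) (fun y => s y.1) *
          Q⁻¹.submatrix (Subtype.val : {y : Σ i, m i // s y.1} → _) id) *ᵥ x = l • x ∧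
        x ∈ LinearMap.range
          (Q.submatrix id (Subtype.val : {y : Σ i, m i // s y.1} → _)).mulVecLin := by
  let e := Equiv.sumCompl fun x : Σ i, m i => s x.1
  have hdet : IsUnit Q.det := (isUnit_iff_isUnit_det Q).1 hQ
  have hcols : fromCols (Q.submatrix id Subtype.val) (Q.submatrix id Subtype.val) =
      Q.submatrix id e := by ext _ (_ | _) <;> rfl
  have hrows : fromRows (Q⁻¹.submatrix Subtype.val id) (Q⁻¹.submatrix Subtype.val id) =
      Q⁻¹.submatrix e id := by ext (_ | _) _ <;> rfl
  have hpencil (M : Matrix (Σ i, m i) (Σ i, m i) R) :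
      P.submatrix e id * M * Q.submatrix id e = (P * M * Q).submatrix e e := rfl
  apply mulVec_eq_smul_mulVec_iff_of_fromBlocks (P := P.submatrix e id)
    (N := (blockDiagonal' N).toBlock (fun y => ¬s y.1) fun y => ¬s y.1)
  · exact e.surjective.injective_comp_right.comp (mulVec_injective_of_isUnit hP)
  · rw [hcols, hrows, submatrix_mul_equiv, mul_nonsing_inv _ hdet, submatrix_id_id]
  · rw [hcols, hrows, ← submatrix_mul _ _ _ _ _ Function.bijective_id, nonsing_inv_mul _ hdet,
      submatrix_one_equiv]
  · rw [hcols, hpencil, hA]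
    refine (blockDiagonal'_ite_submatrix_sumCompl s J 1).trans ?_
    rw [blockDiagonal'_one, toBlock_one_self]
  · rw [hcols, hpencil, hB]
    refine (blockDiagonal'_ite_submatrix_sumCompl s 1 N).trans ?_
    rw [blockDiagonal'_one, toBlock_one_self]
  · exact isNilpotent_toBlock_blockDiagonal'_compl s hN

/-- Theorem 9 of the paper: under the Weierstrass canonical form of
the regular pencil `zB − A`, for every `λ ∈ ℂ` and every nonzero vector `x`,
`A x = λ B x` iff `C x = λ x` and `x` lies in the column space of `Q_{1:r}`. -/
theorem stmt_1
    (d : ℕ) (ni : Fin d → ℕ) (hni : ∀ i, 1 ≤ ni i) (r : ℕ) (hr : r ≤ d)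
    (lam : Fin d → ℂ)
    (A B Pt Q : Matrix ((i : Fin d) × Fin (ni i)) ((i : Fin d) × Fin (ni i)) ℂ)
    (hPt : IsUnit Pt) (hQ : IsUnit Q)
    (hA : Ptᴴ * A * Q = Matrix.blockDiagonal'
      (fun i : Fin d => if (i : ℕ) < r then jordanBlock (ni i) (lam i) else 1))
    (hB : Ptᴴ * B * Q = Matrix.blockDiagonal'
      (fun i : Fin d => if (i : ℕ) < r then 1 else jordanBlock (ni i) 0))
    (l : ℂ) (x : ((i : Fin d) × Fin (ni i)) → ℂ) (hx : x ≠ 0) :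
    A.mulVec x = l • B.mulVec x ↔
      (Cmat d ni r lam Q).mulVec x = l • x ∧
        x ∈ LinearMap.range (Q.submatrix id
          (Subtype.val : {y : (i : Fin d) × Fin (ni i) // (y.1 : ℕ) < r} → _)).mulVecLin := by
  exact stmt_1_general (fun i : Fin d => (i : ℕ) < r)
    (fun i _ => isNilpotent_jordanBlock_zero (ni i))
    ((isUnit_conjTranspose Pt).2 hPt) hQ hA hB l x
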